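/- arXiv:2001.11707 — 2 statements merged into one kernel-verified Lean document; each statement's English description precedes it below -/
import Mathlib

section
/- Let F be a nonempty finite subset of S with |F| = n, let 1 ≤ r ≤ n, and let 𝒦 be a simplicial complex over S containing every subset of F of cardinality r. Then d(F, 𝒦) ≤ 1 − r/n. -/
open scoped BigOperators

/-- A simplicial complex over the vertex set `S`: a nonempty collection of
nonempty finite subsets of `S`, closed under taking nonempty subsets. -/
def IsSimplicialComplex {S : Type*} (K : Set (Finset S)) : Prop :=
  K.Nonempty ∧ (∀ F ∈ K, F.Nonempty) ∧
    ∀ F ∈ K, ∀ G : Finset S, G.Nonempty → G ⊆ F → G ∈ K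

/-- Halved ℓ¹ distance between finitely supported real functions:
`d(α,β) = (1/2) ∑ₛ |α s - β s|`. -/
noncomputable def l1dist {S : Type*} (α β : S →₀ ℝ) : ℝ :=
  (1 / 2) * (α - β).sum fun _ x => |x|

/-- The ℓ¹ geometric realization of a collection `K` of finite subsets of `S`:
finitely supported probability vectors whose support is a face of `K`. -/
def realization {S : Type*} (K : Set (Finset S)) : Set (S →₀ ℝ) :=
  {α | (∀ s, 0 ≤ α s) ∧ (α.sum fun _ x => x) = 1 ∧ α.support ∈ K}

/-- Distance from a point to a set of finitely supported functions. -/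
noncomputable def distToSet {S : Type*} (α : S →₀ ℝ) (X : Set (S →₀ ℝ)) : ℝ :=
  sInf (l1dist α '' X)

/-- One-sided Hausdorff distance between (the realizations of) two complexes. -/
noncomputable def hdelta {S : Type*} (K₁ K₂ : Set (Finset S)) : ℝ :=
  sSup ((fun α => distToSet α (realization K₂)) '' realization K₁)

/-- Hausdorff distance between (the realizations of) two simplicial complexes. -/
noncomputable def hdist {S : Type*} (K₁ K₂ : Set (Finset S)) : ℝ :=
  max (hdelta K₁ K₂) (hdelta K₂ K₁)

/-- `d(F, K)`: supremum of distances to `|K|₁` over probability vectors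
supported exactly on `F`. -/
noncomputable def dFace {S : Type*} (F : Finset S) (K : Set (Finset S)) : ℝ :=
  sSup ((fun α => distToSet α (realization K)) ''
    {α : S →₀ ℝ | (∀ s, 0 ≤ α s) ∧ (α.sum fun _ x => x) = 1 ∧ α.support = F})

/-- The `n`-skeleton of a simplicial complex. -/
def skeleton {S : Type*} (n : ℕ) (K : Set (Finset S)) : Set (Finset S) :=
  {F | F ∈ K ∧ F.card ≤ n + 1}

/-!
Among the `r`-element subsets of `F` some `G` has `α`-mass at least the average `r / n`: discarding
an element whose weight is at most the mean never lowers the mean. Conditioning `α` on `G` gives a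
point of the simplex `G ∈ 𝒦`, and it only moves the mass lying outside `G`, which is at most
`1 - r / n`.
-/

section Average

variable {ι 𝕜 : Type*} [Field 𝕜] [LinearOrder 𝕜] [IsStrictOrderedRing 𝕜]

theorem expect_le_expect_erase [DecidableEq ι] {s : Finset ι} {f : ι → 𝕜} {a : ι} (ha : a ∈ s)
    (hs : 1 < s.card) (hfa : f a ≤ 𝔼 i ∈ s, f i) : 𝔼 i ∈ s, f i ≤ 𝔼 i ∈ s.erase a, f i := by
  have hs' : (1 : 𝕜) < s.card := mod_cast hs
  have hs₀ : (0 : 𝕜) < s.card := zero_lt_one.trans hs'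
  rw [Finset.expect_eq_sum_div_card, le_div_iff₀ hs₀] at hfa
  rw [Finset.expect_eq_sum_div_card, Finset.expect_eq_sum_div_card,
    Finset.cast_card_erase_of_mem ha, Finset.sum_erase_eq_sub ha,
    div_le_div_iff₀ hs₀ (sub_pos.2 hs')]
  linarith

theorem exists_subset_card_eq_expect_le_expect (f : ι → 𝕜) {r : ℕ} (hr : 0 < r) (s : Finset ι)
    (hrs : r ≤ s.card) : ∃ t ⊆ s, t.card = r ∧ 𝔼 i ∈ s, f i ≤ 𝔼 i ∈ t, f i := by
  classical
  induction s using Finset.strongInduction with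
  | H s ih =>
    obtain rfl | hlt := hrs.eq_or_lt
    · exact ⟨s, subset_rfl, rfl, le_rfl⟩
    · obtain ⟨a, ha, hfa⟩ :=
        Finset.exists_le_of_expect_le (Finset.card_pos.1 (hr.trans hlt)) (le_refl (𝔼 i ∈ s, f i))
      have hcard : r ≤ (s.erase a).card := by
        rw [Finset.card_erase_of_mem ha]
        exact Nat.le_sub_one_of_lt hlt
      obtain ⟨t, hts, htr, hle⟩ := ih (s.erase a) (Finset.erase_ssubset ha) hcard
      exact ⟨t, hts.trans (Finset.erase_subset a s), htr,
        (expect_le_expect_erase ha (by lia) hfa).trans hle⟩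

end Average

section Realization

variable {S : Type*} {K : Set (Finset S)} {F G : Finset S} {α β : S →₀ ℝ}

theorem l1dist_nonneg (α β : S →₀ ℝ) : 0 ≤ l1dist α β :=
  mul_nonneg one_half_pos.le (Finset.sum_nonneg fun _ _ => abs_nonneg _)

theorem distToSet_le_l1dist {X : Set (S →₀ ℝ)} (hβ : β ∈ X) : distToSet α X ≤ l1dist α β :=
  csInf_le ⟨0, Set.forall_mem_image.2 fun γ _ => l1dist_nonneg α γ⟩ (Set.mem_image_of_mem _ hβ)

theorem l1dist_eq_sum_sub_sum (hα : ∀ s ∉ G, 0 ≤ α s) (hβG : β.support ⊆ G)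
    (hαβ : ∀ s ∈ G, α s ≤ β s) (hmass : (α.sum fun _ x => x) = β.sum fun _ x => x) :
    l1dist α β = (α.sum fun _ x => x) - ∑ s ∈ G, α s := by
  classical
  set U := α.support ∪ G
  have hαβU : (α - β).support ⊆ U :=
    Finsupp.support_sub.trans (Finset.union_subset_union_right hβG)
  have hαU : (α.sum fun _ x => x) = ∑ s ∈ U, α s :=
    α.sum_of_support_subset Finset.subset_union_left _ fun _ _ => rfl
  have hβsum : (β.sum fun _ x => x) = ∑ s ∈ G, β s :=
    β.sum_of_support_subset hβG _ fun _ _ => rfl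
  have hoff : ∑ s ∈ U \ G, |(α - β) s| = ∑ s ∈ U \ G, α s := by
    refine Finset.sum_congr rfl fun s hs => ?_
    have hsG : s ∉ G := (Finset.mem_sdiff.1 hs).2
    rw [Finsupp.sub_apply, Finsupp.notMem_support_iff.1 fun h => hsG (hβG h), sub_zero,
      abs_of_nonneg (hα s hsG)]
  have hon : ∑ s ∈ G, |(α - β) s| = ∑ s ∈ G, β s - ∑ s ∈ G, α s := by
    rw [← Finset.sum_sub_distrib]
    refine Finset.sum_congr rfl fun s hs => ?_
    rw [Finsupp.sub_apply, abs_of_nonpos (sub_nonpos.2 (hαβ s hs)), neg_sub]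
  have hsplit : ∑ s ∈ U \ G, α s + ∑ s ∈ G, α s = ∑ s ∈ U, α s :=
    Finset.sum_sdiff Finset.subset_union_right
  rw [l1dist, Finsupp.sum_of_support_subset _ hαβU _ fun _ _ => abs_zero,
    ← Finset.sum_sdiff Finset.subset_union_right, hoff, hon]
  linarith

open scoped Classical in
/-- The conditional distribution of the weight vector `α` on the finite set `G`: `α` is restricted
to `G` and rescaled to total mass `1`. It is `0` when `α` has mass `0` on `G`. -/
noncomputable def conditionOn (α : S →₀ ℝ) (G : Finset S) : S →₀ ℝ :=
  (∑ s ∈ G, α s)⁻¹ • α.filter (· ∈ G)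

theorem conditionOn_apply_of_mem {s : S} (hs : s ∈ G) :
    conditionOn α G s = (∑ t ∈ G, α t)⁻¹ * α s := by
  classical
  rw [conditionOn, Finsupp.smul_apply, Finsupp.filter_apply_pos _ _ hs, smul_eq_mul]

theorem support_conditionOn_subset (α : S →₀ ℝ) (G : Finset S) :
    (conditionOn α G).support ⊆ G := by
  classical
  refine Finsupp.support_smul.trans fun s hs => ?_
  rw [Finsupp.support_filter] at hs
  exact (Finset.mem_filter.1 hs).2

theorem sum_conditionOn (hG : ∑ s ∈ G, α s ≠ 0) : ((conditionOn α G).sum fun _ x => x) = 1 := by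
  rw [Finsupp.sum_of_support_subset _ (support_conditionOn_subset α G) _ fun _ _ => rfl,
    Finset.sum_congr rfl fun s hs => conditionOn_apply_of_mem hs, ← Finset.mul_sum,
    inv_mul_cancel₀ hG]

theorem conditionOn_mem_realization (hG : G ∈ K) (hne : G.Nonempty) (hα : ∀ s ∈ G, 0 < α s) :
    conditionOn α G ∈ realization K := by
  have hmass : 0 < ∑ s ∈ G, α s := Finset.sum_pos hα hne
  have hpos : ∀ s ∈ G, 0 < conditionOn α G s := fun s hs => by
    rw [conditionOn_apply_of_mem hs]
    exact mul_pos (inv_pos.2 hmass) (hα s hs)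
  have hsupp : (conditionOn α G).support = G :=
    (support_conditionOn_subset α G).antisymm fun s hs =>
      Finsupp.mem_support_iff.2 (hpos s hs).ne'
  refine ⟨fun s => ?_, sum_conditionOn hmass.ne', hsupp.symm ▸ hG⟩
  by_cases hs : s ∈ G
  · exact (hpos s hs).le
  · exact (Finsupp.notMem_support_iff.1 (hsupp.symm ▸ hs)).ge

theorem l1dist_conditionOn (hα : ∀ s, 0 ≤ α s) (hα₁ : (α.sum fun _ x => x) = 1)
    (hG : 0 < ∑ s ∈ G, α s) : l1dist α (conditionOn α G) = 1 - ∑ s ∈ G, α s := by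
  classical
  have hmass_le : ∑ s ∈ G, α s ≤ 1 := by
    rw [← hα₁, α.sum_of_support_subset Finset.subset_union_left _ fun _ _ => rfl]
    exact Finset.sum_le_sum_of_subset_of_nonneg Finset.subset_union_right fun s _ _ => hα s
  have hle : ∀ s ∈ G, α s ≤ conditionOn α G s := fun s hs => by
    rw [conditionOn_apply_of_mem hs]
    exact le_mul_of_one_le_left (hα s) ((one_le_inv₀ hG).2 hmass_le)
  rw [l1dist_eq_sum_sub_sum (fun s _ => hα s) (support_conditionOn_subset α G) hle
    (hα₁.trans (sum_conditionOn hG.ne').symm), hα₁]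

theorem distToSet_realization_le_one_sub_sum (hα : ∀ s, 0 ≤ α s)
    (hα₁ : (α.sum fun _ x => x) = 1) (hG : G ∈ K) (hne : G.Nonempty) (hGα : G ⊆ α.support) :
    distToSet α (realization K) ≤ 1 - ∑ s ∈ G, α s := by
  have hpos : ∀ s ∈ G, 0 < α s := fun s hs =>
    (hα s).lt_of_ne' (Finsupp.mem_support_iff.1 (hGα hs))
  exact (distToSet_le_l1dist (conditionOn_mem_realization hG hne hpos)).trans_eq
    (l1dist_conditionOn hα hα₁ (Finset.sum_pos hpos hne))

theorem stmt8_general {r : ℕ} (hr : 0 < r) (hrF : r ≤ F.card)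
    (hFK : ∀ G ⊆ F, G.card = r → G ∈ K) : dFace F K ≤ 1 - (r : ℝ) / F.card := by
  have hr₀ : (0 : ℝ) < r := mod_cast hr
  refine Real.sSup_le ?_ (sub_nonneg.2 (div_le_one_of_le₀ (mod_cast hrF) (Nat.cast_nonneg _)))
  rintro _ ⟨α, ⟨hα, hα₁, rfl⟩, rfl⟩
  obtain ⟨G, hGα, hGr, havg⟩ := exists_subset_card_eq_expect_le_expect α hr α.support hrF
  have hmass : (r : ℝ) / α.support.card ≤ ∑ s ∈ G, α s := by
    rw [Finset.expect_eq_sum_div_card, Finset.expect_eq_sum_div_card, hGr, le_div_iff₀ hr₀] at havg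
    calc (r : ℝ) / α.support.card = (α.sum fun _ x => x) / α.support.card * r := by
          rw [hα₁, one_div_mul_eq_div]
      _ ≤ ∑ s ∈ G, α s := havg
  calc distToSet α (realization K) ≤ 1 - ∑ s ∈ G, α s :=
        distToSet_realization_le_one_sub_sum hα hα₁ (hFK G hGα hGr)
          (Finset.card_pos.1 (hGr ▸ hr)) hGα
    _ ≤ 1 - (r : ℝ) / α.support.card := sub_le_sub_left hmass 1

end Realization

/-- If `𝒦` contains every subset of `F` of cardinality `r` (with `1 ≤ r ≤ n = |F|`),
then `d(F,𝒦) ≤ 1 - r/n`. -/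
theorem stmt8 {S : Type*} (K : Set (Finset S)) (hK : IsSimplicialComplex K)
    (F : Finset S) (hF : F.Nonempty) (n r : ℕ) (hn : F.card = n)
    (hr1 : 1 ≤ r) (hrn : r ≤ n)
    (hall : ∀ G : Finset S, G ⊆ F → G.card = r → G ∈ K) :
    dFace F K ≤ 1 - (r : ℝ) / n := by
  subst hn
  exact stmt8_general hr1 hrn hall
end

section
/- If 𝒦₁ and 𝒦₂ are finite simplicial complexes over S (each having only finitely many faces), then d(𝒦₁, 𝒦₂) is a rational number. -/
open scoped BigOperators

/-!
Moving all the mass of a probability vector `α` outside a face `F` onto a vertex of `F` shows that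
the distance from `α` to the simplex on `F` is `1 - α(F)`, so the distance from `α` to `|K|₁` is
`1 - max_{F ∈ K} α(F)`. Hence the one-sided distance from `|K₁|₁` to `|K₂|₁` is `1 - t`, where `t`
is the minimum over `α ∈ |K₁|₁` of the largest mass `α(F)` of a face `F ∈ K₂`. If `K₁` is finite,
only the finitely many traces of faces of `K₂` on the vertices of `K₁` matter, and compactness
provides a minimizer.

If `t` were irrational, there would be additive maps `θ : ℝ → ℝ`, pointwise as close to the identity
as desired, with `θ 1 = 1` and `θ t < t`. Applying such a `θ` to the coordinates of a minimizer `α`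
applies it to every mass `α(F)` as well, hence gives a point of `|K₁|₁` whose face masses are all
smaller than `t`, a contradiction.

If instead `K₁` is infinite and `K₂` is finite, then `K₁` has a vertex outside all faces of `K₂`,
at distance `1` from `|K₂|₁`.
-/

open Filter Topology

section SimplicialComplex

variable {S : Type*} {K K₁ K₂ : Set (Finset S)} {F U : Finset S} {α β : S →₀ ℝ}

theorem sum_eq_sum_of_support_subset (h : α.support ⊆ U) :
    (α.sum fun _ x => x) = ∑ s ∈ U, α s :=
  Finsupp.sum_of_support_subset α h _ fun _ _ => rfl

theorem l1dist_eq_sum (hα : α.support ⊆ U) (hβ : β.support ⊆ U) :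
    l1dist α β = 1 / 2 * ∑ s ∈ U, |α s - β s| := by
  classical
  rw [l1dist, Finsupp.sum_of_support_subset _
    (Finsupp.support_sub.trans (Finset.union_subset hα hβ)) _ fun _ _ => abs_zero]
  rfl

theorem mem_realization_of_support_subset (hK : IsSimplicialComplex K) (hF : F ∈ K)
    (hα₀ : ∀ s, 0 ≤ α s) (hα₁ : (α.sum fun _ x => x) = 1) (hαF : α.support ⊆ F) :
    α ∈ realization K := by
  refine ⟨hα₀, hα₁, hK.2.2 F hF _ (Finsupp.support_nonempty_iff.2 ?_) hαF⟩
  rintro rfl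
  simp at hα₁

theorem single_mem_realization {v : S} (hv : {v} ∈ K) : Finsupp.single v 1 ∈ realization K := by
  refine ⟨fun s => Finsupp.single_nonneg.2 zero_le_one s, by simp, ?_⟩
  rwa [Finsupp.support_single v one_ne_zero]

theorem sum_le_one_of_mem_realization (hα : α ∈ realization K) (F : Finset S) :
    ∑ s ∈ F, α s ≤ 1 := by
  classical
  rw [← hα.2.1, sum_eq_sum_of_support_subset (α.support.subset_union_left (s₂ := F))]
  exact Finset.sum_le_sum_of_subset_of_nonneg Finset.subset_union_right fun s _ _ => hα.1 s

section DistanceToRealization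

theorem l1dist_eq_one_sub_sum_min (hα : α ∈ realization K₁) (hβ : β ∈ realization K₂)
    (hβF : β.support ⊆ F) : l1dist α β = 1 - ∑ s ∈ F, min (α s) (β s) := by
  classical
  have hα' : α.support ⊆ α.support ∪ F := Finset.subset_union_left
  have hF' : F ⊆ α.support ∪ F := Finset.subset_union_right
  have hα₁ := hα.2.1
  have hβ₁ := hβ.2.1
  rw [sum_eq_sum_of_support_subset hα'] at hα₁
  rw [sum_eq_sum_of_support_subset (hβF.trans hF')] at hβ₁
  have hmin : ∑ s ∈ F, min (α s) (β s) = ∑ s ∈ α.support ∪ F, min (α s) (β s) := by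
    refine Finset.sum_subset hF' fun s _ hs => ?_
    rw [Finsupp.notMem_support_iff.1 fun h => hs (hβF h), min_eq_right (hα.1 s)]
  have habs (a b : ℝ) : |a - b| = a + b - 2 * min a b := by
    linarith [min_add_max a b, max_sub_min_eq_abs a b, abs_sub_comm a b]
  rw [l1dist_eq_sum hα' (hβF.trans hF'), hmin]
  simp only [habs, Finset.sum_sub_distrib, Finset.sum_add_distrib, ← Finset.mul_sum]
  rw [hα₁, hβ₁]
  ring

theorem one_sub_sum_support_le_l1dist (hα : α ∈ realization K₁) (hβ : β ∈ realization K₂) :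
    1 - ∑ s ∈ β.support, α s ≤ l1dist α β := by
  rw [l1dist_eq_one_sub_sum_min hα hβ subset_rfl]
  exact sub_le_sub_left (Finset.sum_le_sum fun s _ => min_le_left _ _) 1

theorem exists_mem_realization_support_subset_forall_le (hK₂ : IsSimplicialComplex K₂)
    (hα : α ∈ realization K₁) (hF : F ∈ K₂) :
    ∃ β ∈ realization K₂, β.support ⊆ F ∧ ∀ s ∈ F, α s ≤ β s := by
  classical
  obtain ⟨v, hv⟩ := hK₂.2.1 F hF
  set c := 1 - ∑ s ∈ F, α s
  have hc₀ : 0 ≤ c := sub_nonneg.2 (sum_le_one_of_mem_realization hα F)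
  set β : S →₀ ℝ := α.filter (· ∈ F) + Finsupp.single v c with hβ
  have hβF : β.support ⊆ F := by
    refine Finsupp.support_add.trans (Finset.union_subset ?_ ?_)
    · exact fun s hs => (Finset.mem_filter.1 hs).2
    · exact Finsupp.support_single_subset.trans (Finset.singleton_subset_iff.2 hv)
  have hv₀ (s : S) : 0 ≤ Finsupp.single v c s := Finsupp.single_nonneg.2 hc₀ s
  have hαβ : ∀ s ∈ F, α s ≤ β s := fun s hs => by
    rw [hβ, Finsupp.add_apply, Finsupp.filter_apply_pos _ _ hs]
    exact le_add_of_nonneg_right (hv₀ s)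
  have hβ₀ (s : S) : 0 ≤ β s := by
    by_cases hs : s ∈ F
    · exact (hα.1 s).trans (hαβ s hs)
    · exact (Finsupp.notMem_support_iff.1 fun h => hs (hβF h)).ge
  have hβ₁ : (β.sum fun _ x => x) = 1 := by
    have hfilter : ∑ s ∈ F, α.filter (· ∈ F) s = ∑ s ∈ F, α s :=
      Finset.sum_congr rfl fun s hs => Finsupp.filter_apply_pos _ _ hs
    have hsingle : ∑ s ∈ F, Finsupp.single v c s = c := by
      simp [Finsupp.single_apply, hv]
    rw [sum_eq_sum_of_support_subset hβF]
    simp only [hβ, Finsupp.add_apply, Finset.sum_add_distrib, hfilter, hsingle]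
    exact add_sub_cancel _ 1
  exact ⟨β, mem_realization_of_support_subset hK₂ hF hβ₀ hβ₁ hβF, hβF, hαβ⟩

theorem exists_mem_realization_l1dist_eq (hK₂ : IsSimplicialComplex K₂)
    (hα : α ∈ realization K₁) (hF : F ∈ K₂) :
    ∃ β ∈ realization K₂, l1dist α β = 1 - ∑ s ∈ F, α s := by
  obtain ⟨β, hβ, hβF, hαβ⟩ := exists_mem_realization_support_subset_forall_le hK₂ hα hF
  refine ⟨β, hβ, ?_⟩
  rw [l1dist_eq_one_sub_sum_min hα hβ hβF,
    Finset.sum_congr rfl fun s hs => min_eq_left (hαβ s hs)]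

open Classical in
/-- The trace `{F ∩ U | F ∈ K}` of a collection `K` of finite sets on a finite set `U`. It is finite
even when `K` is not, and contains all that a weight supported in `U` can see of `K`. -/
noncomputable def faceTrace (K : Set (Finset S)) (U : Finset S) : Finset (Finset S) :=
  {G ∈ U.powerset | ∃ F ∈ K, F ∩ U = G}

open Classical in
theorem inter_mem_faceTrace (hF : F ∈ K) (U : Finset S) : F ∩ U ∈ faceTrace K U :=
  Finset.mem_filter.2 ⟨Finset.mem_powerset.2 Finset.inter_subset_right, F, hF, rfl⟩

theorem faceTrace_nonempty (hK : K.Nonempty) (U : Finset S) : (faceTrace K U).Nonempty :=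
  let ⟨_, hF⟩ := hK
  ⟨_, inter_mem_faceTrace hF U⟩

/-- The largest mass that a weight `x` on `S` gives to a member of a nonempty finite family `T` of
finite sets. -/
noncomputable def maxMass (T : Finset (Finset S)) (hT : T.Nonempty) (x : S → ℝ) : ℝ :=
  T.sup' hT fun F => ∑ s ∈ F, x s

theorem continuous_maxMass (T : Finset (Finset S)) (hT : T.Nonempty) :
    Continuous (maxMass T hT) :=
  Continuous.finset_sup'_apply hT fun _ _ => by fun_prop

theorem distToSet_realization (hK₂ : IsSimplicialComplex K₂) (hα : α ∈ realization K₁)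
    (hU : α.support ⊆ U) :
    distToSet α (realization K₂) = 1 - maxMass (faceTrace K₂ U) (faceTrace_nonempty hK₂.1 U) α := by
  classical
  have hinter (F : Finset S) : ∑ s ∈ F ∩ U, α s = ∑ s ∈ F, α s :=
    Finset.sum_subset Finset.inter_subset_left fun s hsF hs =>
      Finsupp.notMem_support_iff.1 fun h => hs (Finset.mem_inter.2 ⟨hsF, hU h⟩)
  refine IsLeast.csInf_eq ⟨?_, ?_⟩
  · obtain ⟨G, hG, hmax⟩ := Finset.exists_mem_eq_sup' (faceTrace_nonempty hK₂.1 U)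
      fun G => ∑ s ∈ G, α s
    obtain ⟨F, hF, rfl⟩ := (Finset.mem_filter.1 hG).2
    obtain ⟨β, hβ, hαβ⟩ := exists_mem_realization_l1dist_eq hK₂ hα hF
    exact ⟨β, hβ, by rw [hαβ, maxMass, hmax, hinter]⟩
  · rintro _ ⟨β, hβ, rfl⟩
    refine (sub_le_sub_left ?_ 1).trans (one_sub_sum_support_le_l1dist hα hβ)
    rw [← hinter]
    exact Finset.le_sup' (fun G => ∑ s ∈ G, α s) (inter_mem_faceTrace hβ.2.2 U)

theorem distToSet_realization_le_one (hK₂ : IsSimplicialComplex K₂) (hα : α ∈ realization K₁) :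
    distToSet α (realization K₂) ≤ 1 := by
  rw [distToSet_realization hK₂ hα subset_rfl]
  obtain ⟨G, hG⟩ := faceTrace_nonempty hK₂.1 α.support
  exact sub_le_self 1 (Finset.le_sup'_of_le _ hG (Finset.sum_nonneg fun s _ => hα.1 s))

theorem distToSet_realization_eq_one (hK₂ : IsSimplicialComplex K₂) (hα : α ∈ realization K₁)
    (hdisj : ∀ F ∈ K₂, Disjoint α.support F) : distToSet α (realization K₂) = 1 := by
  refine (distToSet_realization_le_one hK₂ hα).antisymm ?_
  obtain ⟨F, hF⟩ := hK₂.1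
  have hne : (l1dist α '' realization K₂).Nonempty :=
    let ⟨β, hβ, _⟩ := exists_mem_realization_l1dist_eq hK₂ hα hF
    ⟨_, β, hβ, rfl⟩
  refine le_csInf hne ?_
  rintro _ ⟨β, hβ, rfl⟩
  have hmass : ∑ s ∈ β.support, α s = 0 := Finset.sum_eq_zero fun s hs =>
    Finsupp.notMem_support_iff.1 (Finset.disjoint_right.1 (hdisj _ hβ.2.2) hs)
  simpa [hmass] using one_sub_sum_support_le_l1dist hα hβ

end DistanceToRealization

section Compactness

/-- The closed simplex spanned by `F`, as a subset of the space `S → ℝ` with its product topology;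
the type `S →₀ ℝ` carries no topology. -/
def closedSimplex (F : Finset S) : Set (S → ℝ) :=
  {x | (∀ s, 0 ≤ x s) ∧ (∀ s ∉ F, x s = 0) ∧ ∑ s ∈ F, x s = 1}

theorem isClosed_closedSimplex (F : Finset S) : IsClosed (closedSimplex F) := by
  have hnonneg : IsClosed {x : S → ℝ | ∀ s, 0 ≤ x s} := by
    simp only [Set.ofPred_forall]
    exact isClosed_iInter fun s => isClosed_le continuous_const (continuous_apply s)
  have hzero : IsClosed {x : S → ℝ | ∀ s ∉ F, x s = 0} := by
    simp only [Set.ofPred_forall]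
    exact isClosed_biInter fun s _ => isClosed_eq (continuous_apply s) continuous_const
  have hsum : IsClosed {x : S → ℝ | ∑ s ∈ F, x s = 1} :=
    isClosed_eq (by fun_prop) continuous_const
  exact hnonneg.inter (hzero.inter hsum)

theorem isCompact_closedSimplex (F : Finset S) : IsCompact (closedSimplex F) := by
  have hcube : IsCompact (Set.univ.pi fun _ : S => Set.Icc (0 : ℝ) 1) :=
    isCompact_univ_pi fun _ => isCompact_Icc
  refine hcube.of_isClosed_subset (isClosed_closedSimplex F) ?_
  rintro x ⟨hx₀, hxF, hx₁⟩ s -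
  refine ⟨hx₀ s, ?_⟩
  by_cases hs : s ∈ F
  · exact hx₁ ▸ Finset.single_le_sum (fun i _ => hx₀ i) hs
  · exact (hxF s hs).trans_le zero_le_one

theorem coe_image_realization (hK : IsSimplicialComplex K) :
    (fun α : S →₀ ℝ => (α : S → ℝ)) '' realization K = ⋃ F ∈ K, closedSimplex F := by
  refine Set.Subset.antisymm ?_ (Set.iUnion₂_subset ?_)
  · rintro _ ⟨α, hα, rfl⟩
    exact Set.mem_biUnion hα.2.2 ⟨hα.1, fun s => Finsupp.notMem_support_iff.1, hα.2.1⟩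
  · rintro F hF x ⟨hx₀, hxF, hx₁⟩
    let α := Finsupp.onFinset F x fun s hs => not_imp_comm.1 (hxF s) hs
    have hαF : α.support ⊆ F := Finsupp.support_onFinset_subset
    have hα₁ : (α.sum fun _ x => x) = 1 := (sum_eq_sum_of_support_subset hαF).trans hx₁
    exact ⟨α, mem_realization_of_support_subset hK hF hx₀ hα₁ hαF, rfl⟩

theorem realization_nonempty (hK : IsSimplicialComplex K) : (realization K).Nonempty := by
  obtain ⟨F, hF⟩ := hK.1
  obtain ⟨v, hv⟩ := hK.2.1 F hF
  exact ⟨_, single_mem_realization <|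
    hK.2.2 F hF {v} (Finset.singleton_nonempty v) (Finset.singleton_subset_iff.2 hv)⟩

theorem exists_isMinOn_realization (hK : IsSimplicialComplex K) (hfin : K.Finite)
    {f : (S → ℝ) → ℝ} (hf : Continuous f) :
    ∃ α ∈ realization K, IsMinOn (fun β : S →₀ ℝ => f β) (realization K) α := by
  have hcompact : IsCompact ((fun α : S →₀ ℝ => (α : S → ℝ)) '' realization K) :=
    coe_image_realization hK ▸ hfin.isCompact_biUnion fun F _ => isCompact_closedSimplex F
  obtain ⟨_, ⟨α, hα, rfl⟩, hmin⟩ :=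
    hcompact.exists_isMinOn ((realization_nonempty hK).image _) hf.continuousOn
  exact ⟨α, hα, fun β hβ => hmin ⟨β, hβ, rfl⟩⟩

end Compactness

section Perturbation

theorem exists_ratLinearMap_eq_zero_of_irrational {t : ℝ} (ht : Irrational t) :
    ∃ ψ : ℝ →ₗ[ℚ] ℚ, ψ 1 = 0 ∧ ψ t = -1 := by
  have hspan : t ∉ Submodule.span ℚ {(1 : ℝ)} := fun h => by
    obtain ⟨q, hq⟩ := Submodule.mem_span_singleton.1 h
    exact ht ⟨q, by rw [← hq, Rat.smul_def, mul_one]⟩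
  obtain ⟨ψ, hψt, hψ⟩ := Submodule.exists_le_ker_of_notMem hspan
  have hψ₁ : ψ 1 = 0 := hψ (Submodule.mem_span_singleton_self 1)
  exact ⟨-(ψ t)⁻¹ • ψ, by simp [hψ₁], by simp [hψt]⟩

theorem exists_addMonoidHom_tendsto_id_of_irrational {t : ℝ} (ht : Irrational t) :
    ∃ θ : ℕ → ℝ →+ ℝ, (∀ n, θ n 1 = 1) ∧ (∀ n, θ n t < t) ∧
      ∀ x, Tendsto (fun n => θ n x) atTop (𝓝 x) := by
  obtain ⟨ψ, hψ₁, hψt⟩ := exists_ratLinearMap_eq_zero_of_irrational ht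
  let θ (n : ℕ) : ℝ →+ ℝ := AddMonoidHom.id ℝ +
    (AddMonoidHom.mulLeft (1 / ((n : ℝ) + 1))).comp
      ((Rat.castHom ℝ).toAddMonoidHom.comp ψ.toAddMonoidHom)
  have hθ (n : ℕ) (x : ℝ) : θ n x = x + 1 / ((n : ℝ) + 1) * (ψ x : ℝ) := rfl
  refine ⟨θ, fun n => by simp [hθ, hψ₁], fun n => ?_, fun x => ?_⟩
  · have : 0 < 1 / ((n : ℝ) + 1) := Nat.one_div_pos_of_nat
    rw [hθ, hψt]
    push_cast
    linarith
  · simpa [hθ] using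
      (tendsto_one_div_add_atTop_nhds_zero_nat.mul_const (ψ x : ℝ)).const_add x

variable {ι : Type*} {l : Filter ι} {θ : ι → ℝ →+ ℝ}

theorem eventually_mapRange_mem_realization (hK : IsSimplicialComplex K)
    (hα : α ∈ realization K) (hθ₁ : ∀ i, θ i 1 = 1)
    (hθ : ∀ x, Tendsto (fun i => θ i x) l (𝓝 x)) :
    ∀ᶠ i in l, α.mapRange (θ i) (map_zero _) ∈ realization K := by
  have hpos : ∀ᶠ i in l, ∀ s ∈ α.support, 0 < θ i (α s) := by
    refine (eventually_all_finset _).2 fun s hs => (hθ (α s)).eventually_const_lt ?_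
    exact (hα.1 s).lt_of_ne' (Finsupp.mem_support_iff.1 hs)
  filter_upwards [hpos] with i hi
  have hsupp : (α.mapRange (θ i) (map_zero _)).support ⊆ α.support := Finsupp.support_mapRange
  refine mem_realization_of_support_subset hK hα.2.2 (fun s => ?_) ?_ hsupp
  · by_cases hs : s ∈ α.support
    · exact (hi s hs).le
    · simp [Finsupp.notMem_support_iff.1 hs]
  · calc ((α.mapRange (θ i) (map_zero _)).sum fun _ x => x)
        = ∑ s ∈ α.support, θ i (α s) := sum_eq_sum_of_support_subset hsupp
      _ = θ i (∑ s ∈ α.support, α s) := (map_sum (θ i) _ _).symm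
      _ = 1 := by rw [← sum_eq_sum_of_support_subset subset_rfl, hα.2.1, hθ₁]

theorem eventually_maxMass_comp_lt {T : Finset (Finset S)} {hT : T.Nonempty} {x : S → ℝ}
    (hθx : ∀ i, θ i (maxMass T hT x) < maxMass T hT x)
    (hθ : ∀ y, Tendsto (fun i => θ i y) l (𝓝 y)) :
    ∀ᶠ i in l, maxMass T hT (θ i ∘ x) < maxMass T hT x := by
  have hmass (F : Finset S) (hF : F ∈ T) :
      ∀ᶠ i in l, θ i (∑ s ∈ F, x s) < maxMass T hT x := by
    rcases (Finset.le_sup' (fun F => ∑ s ∈ F, x s) hF).lt_or_eq with h | h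
    · exact (hθ _).eventually_lt_const h
    · exact Eventually.of_forall fun i => (congrArg (θ i) h).trans_lt (hθx i)
  filter_upwards [(eventually_all_finset T).2 hmass] with i hi
  refine (Finset.sup'_lt_iff hT).2 fun F hF => ?_
  simpa only [map_sum, Function.comp_apply] using hi F hF

theorem exists_rat_eq_maxMass_of_isMinOn (hK : IsSimplicialComplex K) (hα : α ∈ realization K)
    {T : Finset (Finset S)} {hT : T.Nonempty}
    (hmin : IsMinOn (fun β : S →₀ ℝ => maxMass T hT β) (realization K) α) :
    ∃ q : ℚ, maxMass T hT α = q := by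
  by_contra hirr
  have ht : Irrational (maxMass T hT α) := fun ⟨q, hq⟩ => hirr ⟨q, hq.symm⟩
  obtain ⟨θ, hθ₁, hθt, hθ⟩ := exists_addMonoidHom_tendsto_id_of_irrational ht
  obtain ⟨n, hmem, hlt⟩ := ((eventually_mapRange_mem_realization hK hα hθ₁ hθ).and
    (eventually_maxMass_comp_lt hθt hθ)).exists
  exact (isMinOn_iff.1 hmin _ hmem).not_gt hlt

end Perturbation

theorem exists_rat_eq_hdelta_of_finite_left (h₁ : IsSimplicialComplex K₁)
    (h₂ : IsSimplicialComplex K₂) (hfin : K₁.Finite) : ∃ q : ℚ, hdelta K₁ K₂ = q := by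
  classical
  set U := hfin.toFinset.sup id
  have hU : ∀ α ∈ realization K₁, α.support ⊆ U := fun α hα =>
    Finset.le_sup (f := id) (hfin.mem_toFinset.2 hα.2.2)
  obtain ⟨α, hα, hmin⟩ := exists_isMinOn_realization h₁ hfin
    (continuous_maxMass (faceTrace K₂ U) (faceTrace_nonempty h₂.1 U))
  obtain ⟨q, hq⟩ := exists_rat_eq_maxMass_of_isMinOn h₁ hα hmin
  have hdist : distToSet α (realization K₂) = ((1 - q : ℚ) : ℝ) := by
    rw [distToSet_realization h₂ hα (hU α hα), hq, Rat.cast_sub, Rat.cast_one]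
  refine ⟨1 - q, IsGreatest.csSup_eq ⟨⟨α, hα, hdist⟩, ?_⟩⟩
  rintro _ ⟨β, hβ, rfl⟩
  rw [← hdist]
  simp only [distToSet_realization h₂ hα (hU α hα), distToSet_realization h₂ hβ (hU β hβ)]
  exact sub_le_sub_left (isMinOn_iff.1 hmin β hβ) 1

theorem hdelta_eq_one_of_singleton_mem (h₂ : IsSimplicialComplex K₂) {v : S} (hv : {v} ∈ K₁)
    (hvK₂ : ∀ F ∈ K₂, v ∉ F) : hdelta K₁ K₂ = 1 := by
  have hmem := single_mem_realization hv
  have hdisj : ∀ F ∈ K₂, Disjoint (Finsupp.single v (1 : ℝ)).support F := fun F hF => by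
    rw [Finsupp.support_single v one_ne_zero]
    exact Finset.disjoint_singleton_left.2 (hvK₂ F hF)
  refine IsGreatest.csSup_eq ⟨⟨_, hmem, distToSet_realization_eq_one h₂ hmem hdisj⟩, ?_⟩
  rintro _ ⟨β, hβ, rfl⟩
  exact distToSet_realization_le_one h₂ hβ

theorem exists_singleton_mem_notMem_of_infinite (hK : IsSimplicialComplex K) (hinf : K.Infinite)
    (U : Finset S) : ∃ v ∉ U, {v} ∈ K := by
  obtain ⟨F, hF, hFU⟩ := hinf.exists_notMem_finset U.powerset
  obtain ⟨v, hvF, hvU⟩ := Finset.not_subset.1 fun h => hFU (Finset.mem_powerset.2 h)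
  exact ⟨v, hvU, hK.2.2 F hF {v} (Finset.singleton_nonempty v) (Finset.singleton_subset_iff.2 hvF)⟩

theorem exists_rat_eq_hdelta_of_finite_right (h₁ : IsSimplicialComplex K₁)
    (h₂ : IsSimplicialComplex K₂) (hfin : K₂.Finite) : ∃ q : ℚ, hdelta K₁ K₂ = q := by
  classical
  rcases K₁.finite_or_infinite with hfin₁ | hinf
  · exact exists_rat_eq_hdelta_of_finite_left h₁ h₂ hfin₁
  · obtain ⟨v, hvU, hv⟩ :=
      exists_singleton_mem_notMem_of_infinite h₁ hinf (hfin.toFinset.sup id)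
    have hvK₂ : ∀ F ∈ K₂, v ∉ F := fun F hF hvF =>
      hvU (Finset.le_sup (f := id) (hfin.mem_toFinset.2 hF) hvF)
    exact ⟨1, by rw [hdelta_eq_one_of_singleton_mem h₂ hv hvK₂, Rat.cast_one]⟩

theorem stmt10_general (h₁ : IsSimplicialComplex K₁) (h₂ : IsSimplicialComplex K₂)
    (hfin : K₁.Finite ∨ K₂.Finite) : ∃ q : ℚ, hdist K₁ K₂ = q := by
  have hrat : (∃ a : ℚ, hdelta K₁ K₂ = a) ∧ ∃ b : ℚ, hdelta K₂ K₁ = b := by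
    rcases hfin with hfin | hfin
    · exact ⟨exists_rat_eq_hdelta_of_finite_left h₁ h₂ hfin,
        exists_rat_eq_hdelta_of_finite_right h₂ h₁ hfin⟩
    · exact ⟨exists_rat_eq_hdelta_of_finite_right h₁ h₂ hfin,
        exists_rat_eq_hdelta_of_finite_left h₂ h₁ hfin⟩
  obtain ⟨⟨a, ha⟩, b, hb⟩ := hrat
  exact ⟨max a b, by rw [hdist, ha, hb, Rat.cast_max]⟩

end SimplicialComplex

/-- The Hausdorff distance between two finite simplicial complexes is rational. -/
theorem stmt10 {S : Type*} (K₁ K₂ : Set (Finset S))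
    (h1 : IsSimplicialComplex K₁) (h2 : IsSimplicialComplex K₂)
    (hf1 : K₁.Finite) (hf2 : K₂.Finite) :
    ∃ q : ℚ, hdist K₁ K₂ = (q : ℝ) :=
  stmt10_general h1 h2 (.inl hf1)
end
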